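/- In the MM-SPIR model (with all constraints), for every size-P subset 𝒫 of {1,…,K}: N·P·L ≤ (N−1)·H(A_1^{[𝒫]},…,A_N^{[𝒫]} | F). -/

import Mathlib

open Finset

namespace MMSPIR

variable {Ω : Type} [Fintype Ω]

/-- Probability that the random variable `X` takes the value `v`,
under the weight function `p` on the finite sample space `Ω`. -/
noncomputable def prob (p : Ω → ℝ) {V : Type} [DecidableEq V] (X : Ω → V) (v : V) : ℝ :=
  ∑ ω ∈ Finset.univ.filter (fun ω => X ω = v), p ω

/-- Shannon entropy of `X`, with logarithm taken to base `q`. -/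
noncomputable def ent (q : ℕ) (p : Ω → ℝ) {V : Type} [Fintype V] [DecidableEq V]
    (X : Ω → V) : ℝ :=
  -∑ v : V, prob p X v * Real.logb q (prob p X v)

/-- Conditional entropy `H(X | Y)`, base `q`. -/
noncomputable def cent (q : ℕ) (p : Ω → ℝ) {V W : Type} [Fintype V] [DecidableEq V]
    [Fintype W] [DecidableEq W] (X : Ω → V) (Y : Ω → W) : ℝ :=
  ent q p (fun ω => (X ω, Y ω)) - ent q p Y

/-- Mutual information `I(X ; Y)`, base `q`. -/
noncomputable def mi (q : ℕ) (p : Ω → ℝ) {V W : Type} [Fintype V] [DecidableEq V]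
    [Fintype W] [DecidableEq W] (X : Ω → V) (Y : Ω → W) : ℝ :=
  ent q p X + ent q p Y - ent q p (fun ω => (X ω, Y ω))

/-- Conditional mutual information `I(X ; Y | Z)`, base `q`. -/
noncomputable def cmi (q : ℕ) (p : Ω → ℝ) {U V W : Type} [Fintype U] [DecidableEq U]
    [Fintype V] [DecidableEq V] [Fintype W] [DecidableEq W]
    (X : Ω → U) (Y : Ω → V) (Z : Ω → W) : ℝ :=
  cent q p X Z + cent q p Y Z - cent q p (fun ω => (X ω, Y ω)) Z

/-- `X` and `Y` have the same distribution. -/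
def IdentDist (p : Ω → ℝ) {V : Type} [DecidableEq V] (X Y : Ω → V) : Prop :=
  ∀ v, prob p X v = prob p Y v

/-!
Each message `k` is avoided by some demand, for which database privacy makes `W_k` independent of
the answers even given the other messages. By user privacy a single answer together with its query
has the same joint law with the messages whatever the demand is, so under any demand the answer
`A_n`, given its query, is independent of all messages jointly; this persists when the query is
replaced by the user randomness `F`. Decoding `W_𝒫` from all the answers thus yields
`H(W_𝒫) + H(A_n | F) ≤ H(A_1, …, A_N | F)` for every `n`. Summing over `n` and bounding
`∑ H(A_n | F)` from below by `H(A_1, …, A_N | F)` gives the theorem.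
-/

theorem sum_mul_logb_le_sum_mul_logb {α : Type*} {s : Finset α} {b : ℝ} (hb : 1 < b) {f g : α → ℝ}
    (hf : ∀ i ∈ s, 0 ≤ f i) (hg : ∀ i ∈ s, 0 ≤ g i) (hfg : ∀ i ∈ s, f i ≠ 0 → g i ≠ 0)
    (hsum : ∑ i ∈ s, g i ≤ ∑ i ∈ s, f i) :
    ∑ i ∈ s, f i * Real.logb b (g i) ≤ ∑ i ∈ s, f i * Real.logb b (f i) := by
  have termwise : ∀ i ∈ s, f i * Real.log (g i) - f i * Real.log (f i) ≤ g i - f i := by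
    intro i hi
    rcases (hf i hi).eq_or_lt' with hf0 | hfpos
    · simpa [hf0] using hg i hi
    · have hgpos : 0 < g i := (hg i hi).lt_of_ne' (hfg i hi hfpos.ne')
      calc f i * Real.log (g i) - f i * Real.log (f i)
          = f i * Real.log (g i / f i) := by rw [Real.log_div hgpos.ne' hfpos.ne', mul_sub]
        _ ≤ f i * (g i / f i - 1) := by gcongr; exact Real.log_le_sub_one_of_pos (by positivity)
        _ = g i - f i := by field_simp
  have natural_log : ∑ i ∈ s, f i * Real.log (g i) ≤ ∑ i ∈ s, f i * Real.log (f i) := by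
    have := sum_le_sum termwise
    simp only [sum_sub_distrib] at this
    linarith
  simp only [Real.logb, ← mul_div_assoc, ← sum_div]
  exact div_le_div_of_nonneg_right natural_log (Real.log_pos hb).le

section Probability

variable {p : Ω → ℝ} {U V : Type} [DecidableEq U] [DecidableEq V]

theorem sum_prob_mul [Fintype V] (p : Ω → ℝ) (X : Ω → V) (g : V → ℝ) :
    ∑ v, prob p X v * g v = ∑ ω, p ω * g (X ω) := by
  rw [← sum_fiberwise univ X]
  refine sum_congr rfl fun v _ => ?_
  rw [prob, sum_mul]
  exact sum_congr rfl fun ω hω => by rw [(mem_filter.1 hω).2]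

theorem sum_prob [Fintype V] (p : Ω → ℝ) (X : Ω → V) : ∑ v, prob p X v = ∑ ω, p ω :=
  sum_fiberwise univ X p

theorem sum_prob_prod_left [Fintype U] (p : Ω → ℝ) (X : Ω → U) (Y : Ω → V) (v : V) :
    ∑ u, prob p (fun ω => (X ω, Y ω)) (u, v) = prob p Y v := by
  simp only [prob, Prod.mk.injEq, and_comm (b := Y _ = v), ← filter_filter]
  exact sum_fiberwise _ X p

theorem prob_comp [Fintype V] (p : Ω → ℝ) (X : Ω → V) (r : V → U) (u : U) :
    prob p (fun ω => r (X ω)) u = ∑ v with r v = u, prob p X v := by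
  calc prob p (fun ω => r (X ω)) u = ∑ ω, p ω * if r (X ω) = u then 1 else 0 := by
        simp [prob, sum_filter]
    _ = ∑ v, prob p X v * if r v = u then 1 else 0 :=
        (sum_prob_mul p X fun v => if r v = u then 1 else 0).symm
    _ = ∑ v with r v = u, prob p X v := by simp [sum_filter]

theorem prob_nonneg (hp0 : ∀ ω, 0 ≤ p ω) (X : Ω → V) (v : V) : 0 ≤ prob p X v :=
  sum_nonneg fun ω _ => hp0 ω

theorem prob_apply_pos (hp0 : ∀ ω, 0 ≤ p ω) (X : Ω → V) {ω : Ω} (hω : p ω ≠ 0) :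
    0 < prob p X (X ω) :=
  ((hp0 ω).lt_of_ne' hω).trans_le <| single_le_sum (fun ω' _ => hp0 ω') (by simp)

theorem exists_of_prob_ne_zero {X : Ω → V} {v : V} (h : prob p X v ≠ 0) :
    ∃ ω, X ω = v ∧ p ω ≠ 0 := by
  obtain ⟨ω, hω, hpω⟩ := exists_ne_zero_of_sum_ne_zero h
  exact ⟨ω, (mem_filter.1 hω).2, hpω⟩

theorem prob_apply_le_of_factorsThrough (hp0 : ∀ ω, 0 ≤ p ω) {X : Ω → U} {Y : Ω → V}
    (h : X.FactorsThrough Y) (ω : Ω) : prob p Y (Y ω) ≤ prob p X (X ω) :=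
  sum_le_sum_of_subset_of_nonneg (monotone_filter_right _ fun _ _ hω' => h hω')
    fun ω' _ _ => hp0 ω'

end Probability

namespace IdentDist

variable {p : Ω → ℝ} {U V W : Type} [DecidableEq U] [Finite V] [DecidableEq V] [DecidableEq W]
  {X Y : Ω → V}

theorem comp (h : IdentDist p X Y) (r : V → U) :
    IdentDist p (fun ω => r (X ω)) (fun ω => r (Y ω)) := fun u => by
  cases nonempty_fintype V
  simp only [prob_comp p _ r, h _]

theorem cent_comp_eq [Fintype U] [Fintype W] (q : ℕ) (h : IdentDist p X Y) (r : V → U)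
    (s : V → W) :
    cent q p (fun ω => r (X ω)) (fun ω => s (X ω)) =
      cent q p (fun ω => r (Y ω)) (fun ω => s (Y ω)) := by
  simp only [cent, ent, h.comp s _, h.comp (fun v => (r v, s v)) _]

end IdentDist

section Entropy

variable {q : ℕ} {p : Ω → ℝ} {U V W : Type}
  [Fintype U] [DecidableEq U] [Fintype V] [DecidableEq V] [Fintype W] [DecidableEq W]

theorem ent_eq_neg_sum (q : ℕ) (p : Ω → ℝ) (X : Ω → V) :
    ent q p X = -∑ ω, p ω * Real.logb q (prob p X (X ω)) := by
  rw [ent, sum_prob_mul p X fun v => Real.logb q (prob p X v)]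

theorem ent_const (q : ℕ) (hp1 : ∑ ω, p ω = 1) (v : V) : ent q p (fun _ => v) = 0 := by
  simp [ent_eq_neg_sum, prob, hp1]

theorem ent_le_of_factorsThrough (hq : 1 < q) (hp0 : ∀ ω, 0 ≤ p ω) {X : Ω → U} {Y : Ω → V}
    (h : X.FactorsThrough Y) : ent q p X ≤ ent q p Y := by
  rw [ent_eq_neg_sum, ent_eq_neg_sum, neg_le_neg_iff]
  refine sum_le_sum fun ω _ => ?_
  by_cases hω : p ω = 0
  · simp [hω]
  · exact mul_le_mul_of_nonneg_left (Real.logb_le_logb_of_le (by exact_mod_cast hq)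
      (prob_apply_pos hp0 Y hω) (prob_apply_le_of_factorsThrough hp0 h ω)) (hp0 ω)

theorem sum_prob_prod_mul_prob_prod_div (p : Ω → ℝ) (X : Ω → U) (Y : Ω → V) (Z : Ω → W) :
    ∑ t : (U × V) × W, prob p (fun ω => (X ω, Z ω)) (t.1.1, t.2) *
      prob p (fun ω => (Y ω, Z ω)) (t.1.2, t.2) / prob p Z t.2 = ∑ ω, p ω := by
  simp only [Fintype.sum_prod_type_right, ← sum_div, ← mul_sum, sum_prob_prod_left, ← sum_mul,
    mul_self_div_self, sum_prob]

-- Gibbs' inequality, comparing the law of `((X, Y), Z)` with `P(x, z) P(y, z) / P(z)`.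
theorem cmi_nonneg (hq : 1 < q) (hp0 : ∀ ω, 0 ≤ p ω) (X : Ω → U) (Y : Ω → V) (Z : Ω → W) :
    0 ≤ cmi q p X Y Z := by
  let T ω := ((X ω, Y ω), Z ω)
  let XZ ω := (X ω, Z ω)
  let YZ ω := (Y ω, Z ω)
  let r (t : (U × V) × W) := prob p XZ (t.1.1, t.2) * prob p YZ (t.1.2, t.2) / prob p Z t.2
  have r_nonneg (t) : 0 ≤ r t :=
    div_nonneg (mul_nonneg (prob_nonneg hp0 _ _) (prob_nonneg hp0 _ _)) (prob_nonneg hp0 _ _)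
  have r_ne_zero (t) (ht : prob p T t ≠ 0) : r t ≠ 0 := by
    obtain ⟨ω, rfl, hω⟩ := exists_of_prob_ne_zero ht
    exact div_ne_zero (mul_ne_zero (prob_apply_pos hp0 XZ hω).ne' (prob_apply_pos hp0 YZ hω).ne')
      (prob_apply_pos hp0 Z hω).ne'
  have gibbs : ∑ t, prob p T t * Real.logb q (r t) ≤ -ent q p T := by
    rw [ent, neg_neg]
    refine sum_mul_logb_le_sum_mul_logb (by exact_mod_cast hq) (fun t _ => prob_nonneg hp0 T t)
      (fun t _ => r_nonneg t) (fun t _ => r_ne_zero t) ?_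
    rw [sum_prob, sum_prob_prod_mul_prob_prod_div]
  have cross_entropy : ∑ t, prob p T t * Real.logb q (r t) =
      ent q p Z - ent q p XZ - ent q p YZ := by
    have logb_r (ω) : p ω * Real.logb q (r (T ω)) = p ω * Real.logb q (prob p XZ (XZ ω)) +
        p ω * Real.logb q (prob p YZ (YZ ω)) - p ω * Real.logb q (prob p Z (Z ω)) := by
      by_cases hω : p ω = 0
      · simp [hω]
      · have hXZ := (prob_apply_pos hp0 XZ hω).ne'
        have hYZ := (prob_apply_pos hp0 YZ hω).ne'
        rw [← mul_add, ← mul_sub, ← Real.logb_mul hXZ hYZ,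
          ← Real.logb_div (mul_ne_zero hXZ hYZ) (prob_apply_pos hp0 Z hω).ne']
    simp only [sum_prob_mul p T fun t => Real.logb q (r t), logb_r, sum_sub_distrib,
      sum_add_distrib, ent_eq_neg_sum]
    ring
  simp only [cmi, cent]
  linarith

end Entropy

section ConditionalEntropy

variable {q : ℕ} {p : Ω → ℝ} {T U V W : Type} [Fintype T] [DecidableEq T]
  [Fintype U] [DecidableEq U] [Fintype V] [DecidableEq V] [Fintype W] [DecidableEq W]
  (hq : 1 < q) (hp0 : ∀ ω, 0 ≤ p ω)

include hq hp0

theorem cent_nonneg (X : Ω → U) (Z : Ω → W) : 0 ≤ cent q p X Z :=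
  sub_nonneg.2 <| ent_le_of_factorsThrough hq hp0 fun _ _ h => (Prod.mk.inj h).2

theorem cent_prod (X : Ω → U) (Y : Ω → V) (Z : Ω → W) :
    cent q p (fun ω => (X ω, Y ω)) Z = cent q p Y Z + cent q p X (fun ω => (Y ω, Z ω)) := by
  have assoc : ent q p (fun ω => ((X ω, Y ω), Z ω)) = ent q p (fun ω => (X ω, Y ω, Z ω)) :=
    le_antisymm (ent_le_of_factorsThrough hq hp0 fun _ _ h => by simp_all)
      (ent_le_of_factorsThrough hq hp0 fun _ _ h => by simp_all)
  simp only [cent, assoc]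
  ring

theorem cent_le_cent_of_factorsThrough_prod {X : Ω → U} {Y : Ω → V} {Z : Ω → W}
    (h : X.FactorsThrough fun ω => (Y ω, Z ω)) : cent q p X Z ≤ cent q p Y Z := by
  refine sub_le_sub_right (ent_le_of_factorsThrough hq hp0 fun ω ω' hYZ => ?_) _
  exact Prod.ext (h hYZ) (Prod.mk.inj hYZ).2

theorem cent_anti_right (X : Ω → U) {Y : Ω → V} {Z : Ω → W} (h : Z.FactorsThrough Y) :
    cent q p X Y ≤ cent q p X Z := by
  have submodular := cmi_nonneg hq hp0 X Y Z
  have hYZ : ent q p (fun ω => (Y ω, Z ω)) ≤ ent q p Y :=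
    ent_le_of_factorsThrough hq hp0 fun _ _ hY => Prod.ext hY (h hY)
  have hXY : ent q p (fun ω => (X ω, Y ω)) ≤ ent q p (fun ω => ((X ω, Y ω), Z ω)) :=
    ent_le_of_factorsThrough hq hp0 fun _ _ h => (Prod.mk.inj h).1
  simp only [cmi, cent] at submodular ⊢
  linarith

theorem cent_le_cent_add_cent {X : Ω → T} {Y : Ω → U} {Y' : Ω → V} {Z : Ω → W}
    (h : X.FactorsThrough fun ω => (Y ω, Y' ω)) :
    cent q p X Z ≤ cent q p Y Z + cent q p Y' Z := by
  calc cent q p X Z ≤ cent q p (fun ω => (Y ω, Y' ω)) Z :=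
        cent_le_cent_of_factorsThrough_prod hq hp0 fun _ _ h' => h (Prod.mk.inj h').1
    _ = cent q p Y' Z + cent q p Y (fun ω => (Y' ω, Z ω)) := cent_prod hq hp0 Y Y' Z
    _ ≤ cent q p Y' Z + cent q p Y Z := by
        gcongr
        exact cent_anti_right hq hp0 Y fun _ _ h' => (Prod.mk.inj h').2
    _ = cent q p Y Z + cent q p Y' Z := add_comm _ _

theorem cent_le_ent (hp1 : ∑ ω, p ω = 1) (X : Ω → U) (Y : Ω → V) : cent q p X Y ≤ ent q p X := by
  calc cent q p X Y ≤ cent q p X (fun _ => ()) := cent_anti_right hq hp0 X fun _ _ _ => rfl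
    _ = ent q p (fun ω => (X ω, ())) := by rw [cent, ent_const q hp1, sub_zero]
    _ ≤ ent q p X := ent_le_of_factorsThrough hq hp0 fun _ _ h => Prod.ext h rfl

end ConditionalEntropy

section Restrict

variable {ι : Type*} {V : ι → Type*} {x y : ∀ i, V i}

theorem restrict_eq_restrict_iff {T : Finset ι} :
    T.restrict x = T.restrict y ↔ ∀ i ∈ T, x i = y i := by
  simp [funext_iff]

theorem restrict_insert_eq_restrict_insert_iff [DecidableEq ι] {k : ι} {T : Finset ι} :
    (insert k T).restrict x = (insert k T).restrict y ↔
      x k = y k ∧ T.restrict x = T.restrict y := by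
  simp [restrict_eq_restrict_iff]

theorem eq_iff_restrict_eq_and_restrict_compl_eq [Fintype ι] [DecidableEq ι] (T : Finset ι) :
    x = y ↔ T.restrict x = T.restrict y ∧ Tᶜ.restrict x = Tᶜ.restrict y := by
  rw [restrict_eq_restrict_iff, restrict_eq_restrict_iff, funext_iff]
  simp only [mem_compl]
  exact ⟨fun h => ⟨fun i _ => h i, fun i _ => h i⟩, fun h i => (em (i ∈ T)).elim (h.1 i) (h.2 i)⟩

end Restrict

section Tuples

variable {q : ℕ} {p : Ω → ℝ} {ι W : Type} {V : ι → Type} [DecidableEq ι]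
  [∀ i, Fintype (V i)] [∀ i, DecidableEq (V i)] [Fintype W] [DecidableEq W]

variable (hq : 1 < q) (hp0 : ∀ ω, 0 ≤ p ω)
include hq hp0

theorem cent_restrict_le_sum (X : Ω → ∀ i, V i) (Z : Ω → W) (T : Finset ι) :
    cent q p (fun ω => T.restrict (X ω)) Z ≤ ∑ i ∈ T, cent q p (fun ω => X ω i) Z := by
  induction T using Finset.induction_on with
  | empty =>
    refine sub_nonpos.2 (ent_le_of_factorsThrough hq hp0 fun _ _ h => Prod.ext ?_ h)
    exact Subsingleton.elim _ _
  | insert k T hk ih =>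
    rw [sum_insert hk]
    exact (cent_le_cent_add_cent hq hp0 fun _ _ h =>
      restrict_insert_eq_restrict_insert_iff.2 (Prod.mk.inj h)).trans (by gcongr)

theorem cent_pi_le_sum [Fintype ι] (X : Ω → ∀ i, V i) (Z : Ω → W) :
    cent q p X Z ≤ ∑ i, cent q p (fun ω => X ω i) Z := by
  refine le_trans ?_ (cent_restrict_le_sum hq hp0 X Z univ)
  refine cent_le_cent_of_factorsThrough_prod hq hp0 fun _ _ h => funext fun i => ?_
  exact restrict_eq_restrict_iff.1 (Prod.mk.inj h).1 i (mem_univ i)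

theorem sum_cent_le_cent_restrict [Fintype ι] (X : Ω → ∀ i, V i) (Z : Ω → W) (T : Finset ι) :
    ∑ i ∈ T, cent q p (fun ω => X ω i) (fun ω => (({i}ᶜ : Finset ι).restrict (X ω), Z ω)) ≤
      cent q p (fun ω => T.restrict (X ω)) Z := by
  induction T using Finset.induction_on with
  | empty => simpa using cent_nonneg hq hp0 _ Z
  | insert k T hk ih =>
    calc _ ≤ cent q p (fun ω => X ω k) (fun ω => (T.restrict (X ω), Z ω)) +
          cent q p (fun ω => T.restrict (X ω)) Z := by
          rw [sum_insert hk]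
          gcongr
          refine cent_anti_right hq hp0 _ fun ω ω' h => ?_
          simp only [Prod.mk.injEq, restrict_eq_restrict_iff, mem_compl, mem_singleton] at h ⊢
          exact ⟨fun i hi => h.1 i (ne_of_mem_of_not_mem hi hk), h.2⟩
      _ = cent q p (fun ω => (X ω k, T.restrict (X ω))) Z := by
          rw [cent_prod hq hp0 (fun ω => X ω k), add_comm]
      _ ≤ cent q p (fun ω => (insert k T).restrict (X ω)) Z :=
          cent_le_cent_of_factorsThrough_prod hq hp0 fun _ _ h =>
            Prod.ext_iff.2 (restrict_insert_eq_restrict_insert_iff.1 (Prod.mk.inj h).1)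

theorem sum_cent_le_cent_pi [Fintype ι] (X : Ω → ∀ i, V i) (Z : Ω → W) :
    ∑ i, cent q p (fun ω => X ω i) (fun ω => (({i}ᶜ : Finset ι).restrict (X ω), Z ω)) ≤
      cent q p X Z := by
  refine (sum_cent_le_cent_restrict hq hp0 X Z univ).trans ?_
  refine cent_le_cent_of_factorsThrough_prod hq hp0 fun _ _ h => ?_
  exact congrArg _ (Prod.mk.inj h).1

theorem sum_le_cent_restrict [Fintype ι] (hp1 : ∑ ω, p ω = 1) {X : Ω → ∀ i, V i} {Z : Ω → W}
    (hX : ∑ i, ent q p (fun ω => X ω i) ≤ cent q p X Z) (T : Finset ι) :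
    ∑ i ∈ T, ent q p (fun ω => X ω i) ≤ cent q p (fun ω => T.restrict (X ω)) Z := by
  have split : cent q p X Z ≤ cent q p (fun ω => T.restrict (X ω)) Z +
      cent q p (fun ω => Tᶜ.restrict (X ω)) Z :=
    cent_le_cent_add_cent hq hp0 fun _ _ h =>
      (eq_iff_restrict_eq_and_restrict_compl_eq T).2 (Prod.mk.inj h)
  have compl : cent q p (fun ω => Tᶜ.restrict (X ω)) Z ≤ ∑ i ∈ Tᶜ, ent q p (fun ω => X ω i) :=
    (cent_restrict_le_sum hq hp0 X Z Tᶜ).trans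
      (sum_le_sum fun i _ => cent_le_ent hq hp0 hp1 _ Z)
  linarith [sum_add_sum_compl T fun i => ent q p (fun ω => X ω i)]

end Tuples

section Independence

variable {q : ℕ} {p : Ω → ℝ} {T U V W : Type} [Fintype T] [DecidableEq T]
  [Fintype U] [DecidableEq U] [Fintype V] [DecidableEq V] [Fintype W] [DecidableEq W]

theorem cent_eq_ent_of_mi_eq_zero {X : Ω → U} {Y : Ω → V} (h : mi q p X Y = 0) :
    cent q p X Y = ent q p X := by
  simp only [mi, cent] at h ⊢
  linarith

variable (hq : 1 < q) (hp0 : ∀ ω, 0 ≤ p ω)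
include hq hp0

theorem cent_add_cent_comm (X : Ω → U) (Y : Ω → V) (Z : Ω → W) :
    cent q p X (fun ω => (Y ω, Z ω)) + cent q p Y Z =
      cent q p Y (fun ω => (X ω, Z ω)) + cent q p X Z := by
  have swap : cent q p (fun ω => (X ω, Y ω)) Z = cent q p (fun ω => (Y ω, X ω)) Z :=
    le_antisymm (cent_le_cent_of_factorsThrough_prod hq hp0 fun _ _ h => by simp_all)
      (cent_le_cent_of_factorsThrough_prod hq hp0 fun _ _ h => by simp_all)
  linarith [cent_prod hq hp0 X Y Z, cent_prod hq hp0 Y X Z]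

theorem cent_le_cent_prod_of_cent_eq_zero (X : Ω → U) {Y : Ω → V} {Z : Ω → W}
    (h : cent q p Y Z = 0) : cent q p X Z ≤ cent q p X (fun ω => (Y ω, Z ω)) := by
  linarith [cent_add_cent_comm hq hp0 X Y Z, cent_nonneg hq hp0 Y fun ω => (X ω, Z ω)]

theorem cent_le_cent_of_cent_eq_zero (X : Ω → U) {Y : Ω → V} {Z : Ω → W}
    (h : cent q p Y Z = 0) : cent q p X Z ≤ cent q p X Y :=
  (cent_le_cent_prod_of_cent_eq_zero hq hp0 X h).trans <|
    cent_anti_right hq hp0 X fun _ _ h' => (Prod.mk.inj h').1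

theorem cent_eq_ent_sub_ent {X : Ω → U} {Y : Ω → V} (h : cent q p Y X = 0) :
    cent q p X Y = ent q p X - ent q p Y := by
  have swap : ent q p (fun ω => (X ω, Y ω)) = ent q p (fun ω => (Y ω, X ω)) :=
    le_antisymm (ent_le_of_factorsThrough hq hp0 fun _ _ h => by simp_all)
      (ent_le_of_factorsThrough hq hp0 fun _ _ h => by simp_all)
  simp only [cent, swap] at h ⊢
  linarith

variable (hp1 : ∑ ω, p ω = 1)
include hp1

theorem ent_prod_le (X : Ω → U) (Y : Ω → V) :
    ent q p (fun ω => (X ω, Y ω)) ≤ ent q p X + ent q p Y :=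
  sub_le_iff_le_add.1 (cent_le_ent hq hp0 hp1 X Y)

theorem cent_le_cent_of_ent_le_cent {X : Ω → U} {Y : Ω → V} {Z : Ω → W}
    (h : ent q p X ≤ cent q p X (fun ω => (Y ω, Z ω))) :
    cent q p Y Z ≤ cent q p Y (fun ω => (X ω, Z ω)) := by
  linarith [cent_add_cent_comm hq hp0 X Y Z, cent_le_ent hq hp0 hp1 X Z]

theorem ent_le_cent_of_ent_eq_add {F : Ω → U} {S : Ω → V} {X : Ω → W}
    (hind : ent q p (fun ω => (F ω, S ω, X ω)) = ent q p F + ent q p S + ent q p X) :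
    ent q p X ≤ cent q p X F := by
  have regroup : ent q p (fun ω => (F ω, S ω, X ω)) ≤ ent q p (fun ω => (S ω, X ω, F ω)) :=
    ent_le_of_factorsThrough hq hp0 fun _ _ h => by simp_all
  have subadditive := ent_prod_le hq hp0 hp1 S fun ω => (X ω, F ω)
  rw [cent]
  linarith

end Independence

section Tuples

variable {q : ℕ} {p : Ω → ℝ} {ι W : Type} {V : ι → Type} [Fintype ι] [DecidableEq ι]
  [∀ i, Fintype (V i)] [∀ i, DecidableEq (V i)] [Fintype W] [DecidableEq W]
  (hq : 1 < q) (hp0 : ∀ ω, 0 ≤ p ω)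
include hq hp0

theorem ent_le_cent_compl_of_cent_eq_zero (hp1 : ∑ ω, p ω = 1) {X : Ω → ∀ i, V i} {Z : Ω → W}
    {T : Finset ι} (hT : cent q p (fun ω => T.restrict (X ω)) Z = 0)
    (hTc : ∑ i ∈ Tᶜ, ent q p (fun ω => X ω i) ≤ cent q p (fun ω => Tᶜ.restrict (X ω)) Z)
    {k : ι} (hk : k ∉ T) :
    ent q p (fun ω => X ω k) ≤
      cent q p (fun ω => X ω k) (fun ω => (({k}ᶜ : Finset ι).restrict (X ω), Z ω)) := by
  have rest : cent q p (fun ω => ({k}ᶜ : Finset ι).restrict (X ω)) Z ≤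
      ∑ i ∈ Tᶜ.erase k, ent q p (fun ω => X ω i) := by
    calc _ ≤ cent q p (fun ω => T.restrict (X ω)) Z +
          cent q p (fun ω => (Tᶜ.erase k).restrict (X ω)) Z := by
          refine cent_le_cent_add_cent hq hp0 fun ω ω' h => ?_
          simp only [Prod.mk.injEq, restrict_eq_restrict_iff, mem_erase, mem_compl,
            mem_singleton] at h ⊢
          exact fun i hi => (em (i ∈ T)).elim (h.1 i) fun hiT => h.2 i ⟨hi, hiT⟩
      _ ≤ ∑ i ∈ Tᶜ.erase k, cent q p (fun ω => X ω i) Z := by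
          rw [hT, zero_add]
          exact cent_restrict_le_sum hq hp0 X Z _
      _ ≤ _ := sum_le_sum fun i _ => cent_le_ent hq hp0 hp1 _ Z
  have chain : cent q p (fun ω => Tᶜ.restrict (X ω)) Z ≤
      cent q p (fun ω => ({k}ᶜ : Finset ι).restrict (X ω)) Z +
        cent q p (fun ω => X ω k) (fun ω => (({k}ᶜ : Finset ι).restrict (X ω), Z ω)) := by
    rw [← cent_prod hq hp0]
    refine cent_le_cent_of_factorsThrough_prod hq hp0 fun ω ω' h => ?_
    simp only [Prod.mk.injEq, restrict_eq_restrict_iff, mem_compl, mem_singleton] at h ⊢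
    exact fun i _ => (eq_or_ne i k).elim (fun hik => hik ▸ h.1.1) (h.1.2 i)
  linarith [add_sum_erase Tᶜ (fun i => ent q p fun ω => X ω i) (mem_compl.2 hk)]

theorem card_mul_le_of_add_cent_le {X : Ω → ∀ i, V i} {Z : Ω → W} {c : ℝ}
    (h : ∀ i, c + cent q p (fun ω => X ω i) Z ≤ cent q p X Z) :
    Fintype.card ι * c ≤ (Fintype.card ι - 1) * cent q p X Z := by
  have sum_bound : ∑ i, (c + cent q p (fun ω => X ω i) Z) ≤ ∑ _i : ι, cent q p X Z :=
    sum_le_sum fun i _ => h i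
  simp only [sum_add_distrib, sum_const, card_univ, nsmul_eq_mul] at sum_bound
  linarith [cent_pi_le_sum hq hp0 X Z]

end Tuples

section Retrieval

variable {q : ℕ} {p : Ω → ℝ} {FT ST QT AT MT : Type} [Fintype FT] [DecidableEq FT]
  [Fintype ST] [DecidableEq ST] [Fintype QT] [DecidableEq QT] [Fintype AT] [DecidableEq AT]
  [Fintype MT] [DecidableEq MT]
  (hq : 1 < q) (hp0 : ∀ ω, 0 ≤ p ω) (hp1 : ∑ ω, p ω = 1)
  {F : Ω → FT} {S : Ω → ST} {Q : Ω → QT} {A : Ω → AT} {W : Ω → MT}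
include hq hp0 hp1

theorem cent_randomness_le_cent_answer
    (hind : ent q p (fun ω => (F ω, S ω, W ω)) = ent q p F + ent q p S + ent q p W)
    (hQ : cent q p Q F = 0) (hA : cent q p A (fun ω => (Q ω, W ω, S ω)) = 0) :
    cent q p F (fun ω => (W ω, Q ω)) ≤ cent q p F (fun ω => (A ω, W ω, Q ω)) := by
  have database_side : ent q p (fun ω => (Q ω, W ω, S ω)) ≤ ent q p Q + ent q p W + ent q p S := by
    linarith [ent_prod_le hq hp0 hp1 Q fun ω => (W ω, S ω), ent_prod_le hq hp0 hp1 W S]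
  have all : ent q p (fun ω => (F ω, S ω, W ω)) ≤ ent q p (fun ω => (F ω, Q ω, W ω, S ω)) :=
    ent_le_of_factorsThrough hq hp0 fun _ _ h => by simp_all
  calc cent q p F (fun ω => (W ω, Q ω)) ≤ cent q p F Q :=
        cent_anti_right hq hp0 F fun _ _ h => (Prod.mk.inj h).2
    _ = ent q p F - ent q p Q := cent_eq_ent_sub_ent hq hp0 hQ
    _ ≤ cent q p F (fun ω => (Q ω, W ω, S ω)) := by rw [cent]; linarith
    _ ≤ cent q p F (fun ω => (A ω, Q ω, W ω, S ω)) :=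
        cent_le_cent_prod_of_cent_eq_zero hq hp0 F hA
    _ ≤ cent q p F (fun ω => (A ω, W ω, Q ω)) :=
        cent_anti_right hq hp0 F fun _ _ h => by simp_all

theorem cent_answer_le_cent_answer_message
    (hind : ent q p (fun ω => (F ω, S ω, W ω)) = ent q p F + ent q p S + ent q p W)
    (hQ : cent q p Q F = 0) (hA : cent q p A (fun ω => (Q ω, W ω, S ω)) = 0)
    (hW : ent q p W ≤ cent q p W (fun ω => (A ω, Q ω))) :
    cent q p A F ≤ cent q p A (fun ω => (W ω, F ω)) := by
  have randomness := cent_randomness_le_cent_answer hq hp0 hp1 hind hQ hA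
  calc cent q p A F ≤ cent q p A Q := cent_le_cent_of_cent_eq_zero hq hp0 A hQ
    _ ≤ cent q p A (fun ω => (W ω, Q ω)) := cent_le_cent_of_ent_le_cent hq hp0 hp1 hW
    _ ≤ cent q p A (fun ω => (F ω, W ω, Q ω)) := by
        linarith [cent_add_cent_comm hq hp0 F A fun ω => (W ω, Q ω)]
    _ ≤ cent q p A (fun ω => (W ω, F ω)) := cent_anti_right hq hp0 A fun _ _ h => by simp_all

end Retrieval

theorem exists_card_eq_notMem {α : Type*} [Fintype α] {n : ℕ}
    (hn : n < Fintype.card α) (a : α) : ∃ s : Finset α, #s = n ∧ a ∉ s := by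
  classical
  obtain ⟨s, hs, hcard⟩ := exists_subset_card_eq (s := {a}ᶜ) (n := n) (by
    rw [card_compl, card_singleton]
    lia)
  exact ⟨s, hcard, fun ha => by simpa using hs ha⟩

section Privacy

variable {q : ℕ} {p : Ω → ℝ} {ι κ FT : Type} {MT : ι → Type} {QT AT : κ → Type}
  [Fintype ι] [DecidableEq ι] [Fintype κ] [DecidableEq κ] [Fintype FT] [DecidableEq FT]
  [∀ k, Fintype (MT k)] [∀ k, DecidableEq (MT k)] [∀ n, Fintype (QT n)] [∀ n, DecidableEq (QT n)]
  [∀ n, Fintype (AT n)] [∀ n, DecidableEq (AT n)]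
  (hq : 1 < q) (hp0 : ∀ ω, 0 ≤ p ω) (hp1 : ∑ ω, p ω = 1)
  {F : Ω → FT} {W : Ω → ∀ k, MT k}
include hq hp0 hp1

theorem ent_message_le_cent_answer_of_notMem {Q : Ω → ∀ n, QT n} {A : Ω → ∀ n, AT n}
    (hW : ∑ k, ent q p (fun ω => W ω k) ≤ cent q p W F) {D : Finset ι}
    (hrel : cent q p (fun ω => D.restrict (W ω)) (fun ω => (A ω, F ω)) = 0)
    (hdpriv : mi q p (fun ω => Dᶜ.restrict (W ω)) (fun ω => (Q ω, A ω, F ω)) = 0)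
    {k : ι} (hk : k ∉ D) (n : κ) :
    ent q p (fun ω => W ω k) ≤
      cent q p (fun ω => W ω k) (fun ω => (({k}ᶜ : Finset ι).restrict (W ω), A ω n, Q ω n)) := by
  have demanded : cent q p (fun ω => D.restrict (W ω)) (fun ω => (Q ω, A ω, F ω)) = 0 :=
    le_antisymm (hrel ▸ cent_anti_right hq hp0 _ fun _ _ h => (Prod.mk.inj h).2)
      (cent_nonneg hq hp0 _ _)
  have undemanded : ∑ i ∈ Dᶜ, ent q p (fun ω => W ω i) ≤
      cent q p (fun ω => Dᶜ.restrict (W ω)) (fun ω => (Q ω, A ω, F ω)) := by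
    rw [cent_eq_ent_of_mi_eq_zero hdpriv]
    exact (sum_le_cent_restrict hq hp0 hp1 hW Dᶜ).trans (cent_le_ent hq hp0 hp1 _ F)
  refine (ent_le_cent_compl_of_cent_eq_zero hq hp0 hp1 demanded undemanded hk).trans ?_
  exact cent_anti_right hq hp0 _ fun _ _ h => by simp_all

-- User privacy replaces the demand by one that avoids `k`, where database privacy hides `W k`.
theorem sum_ent_message_le_cent_answer {Q : Finset ι → Ω → ∀ n, QT n}
    {A : Finset ι → Ω → ∀ n, AT n} {𝒟 : Set (Finset ι)} (h𝒟 : ∀ k, ∃ D ∈ 𝒟, k ∉ D)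
    (hW : ∑ k, ent q p (fun ω => W ω k) ≤ cent q p W F)
    (hrel : ∀ D ∈ 𝒟, cent q p (fun ω => D.restrict (W ω)) (fun ω => (A D ω, F ω)) = 0)
    (hupriv : ∀ n, ∀ D₁ ∈ 𝒟, ∀ D₂ ∈ 𝒟,
      IdentDist p (fun ω => (Q D₁ ω n, A D₁ ω n, W ω)) (fun ω => (Q D₂ ω n, A D₂ ω n, W ω)))
    (hdpriv : ∀ D ∈ 𝒟,
      mi q p (fun ω => Dᶜ.restrict (W ω)) (fun ω => (Q D ω, A D ω, F ω)) = 0)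
    {D : Finset ι} (hD : D ∈ 𝒟) (n : κ) :
    ∑ k, ent q p (fun ω => W ω k) ≤ cent q p W (fun ω => (A D ω n, Q D ω n)) := by
  refine le_trans (sum_le_sum fun k _ => ?_) (sum_cent_le_cent_pi hq hp0 W _)
  obtain ⟨D', hD', hk⟩ := h𝒟 k
  exact (ent_message_le_cent_answer_of_notMem hq hp0 hp1 hW (hrel D' hD') (hdpriv D' hD') hk
    n).trans_eq ((hupriv n D' hD' D hD).cent_comp_eq q (fun t => t.2.2 k)
      fun t => (({k}ᶜ : Finset ι).restrict t.2.2, t.2.1, t.1))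

end Privacy

section LowerBound

variable {q : ℕ} {p : Ω → ℝ} {ι : Type} {MT : ι → Type} [Fintype ι] [DecidableEq ι]
  [∀ k, Fintype (MT k)] [∀ k, DecidableEq (MT k)]

theorem sum_ent_add_cent_le_cent {FT BT CT : Type} [Fintype FT] [DecidableEq FT]
    [Fintype BT] [DecidableEq BT] [Fintype CT] [DecidableEq CT]
    (hq : 1 < q) (hp0 : ∀ ω, 0 ≤ p ω) (hp1 : ∑ ω, p ω = 1)
    {F : Ω → FT} {W : Ω → ∀ k, MT k} {B : Ω → BT} {C : Ω → CT} {D : Finset ι}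
    (hW : ∑ k, ent q p (fun ω => W ω k) ≤ cent q p W F)
    (hB : cent q p (fun ω => D.restrict (W ω)) (fun ω => (B ω, F ω)) = 0)
    (hCB : C.FactorsThrough B) (hC : cent q p C F ≤ cent q p C (fun ω => (W ω, F ω))) :
    ∑ k ∈ D, ent q p (fun ω => W ω k) + cent q p C F ≤ cent q p B F := by
  calc ∑ k ∈ D, ent q p (fun ω => W ω k) + cent q p C F
      ≤ cent q p (fun ω => D.restrict (W ω)) F +
          cent q p B (fun ω => (D.restrict (W ω), F ω)) := by
        gcongr
        · exact sum_le_cent_restrict hq hp0 hp1 hW D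
        · calc cent q p C F ≤ cent q p C (fun ω => (W ω, F ω)) := hC
            _ ≤ cent q p C (fun ω => (D.restrict (W ω), F ω)) :=
                cent_anti_right hq hp0 C fun _ _ h => by simp_all
            _ ≤ cent q p B (fun ω => (D.restrict (W ω), F ω)) :=
                cent_le_cent_of_factorsThrough_prod hq hp0 fun _ _ h => hCB (Prod.mk.inj h).1
    _ = cent q p B F := by
        rw [add_comm, cent_add_cent_comm hq hp0, hB, zero_add]

/-- `𝒟` is the family of admissible demands (in the paper, all sets of `P` messages); the messages
may have different lengths, and all alphabets may depend on the index. -/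
theorem joint_answer_entropy_lower_bound_general {κ FT ST : Type} {QT AT : κ → Type}
    [Fintype κ] [DecidableEq κ] [Fintype FT] [DecidableEq FT] [Fintype ST] [DecidableEq ST]
    [∀ n, Fintype (QT n)] [∀ n, DecidableEq (QT n)] [∀ n, Fintype (AT n)]
    [∀ n, DecidableEq (AT n)]
    (hq : 1 < q) (hp0 : ∀ ω, 0 ≤ p ω) (hp1 : ∑ ω, p ω = 1)
    {W : Ω → ∀ k, MT k} {F : Ω → FT} {S : Ω → ST}
    {Q : Finset ι → Ω → ∀ n, QT n} {A : Finset ι → Ω → ∀ n, AT n}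
    {𝒟 : Set (Finset ι)} (h𝒟 : ∀ k, ∃ D ∈ 𝒟, k ∉ D)
    (hWall : ent q p W = ∑ k, ent q p (fun ω => W ω k))
    (hind : ent q p (fun ω => (F ω, S ω, W ω)) = ent q p F + ent q p S + ent q p W)
    (hQdet : ∀ D ∈ 𝒟, cent q p (Q D) F = 0)
    (hAdet : ∀ D ∈ 𝒟, ∀ n,
      cent q p (fun ω => A D ω n) (fun ω => (Q D ω n, W ω, S ω)) = 0)
    (hrel : ∀ D ∈ 𝒟, cent q p (fun ω => D.restrict (W ω)) (fun ω => (A D ω, F ω)) = 0)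
    (hupriv : ∀ n, ∀ D₁ ∈ 𝒟, ∀ D₂ ∈ 𝒟,
      IdentDist p (fun ω => (Q D₁ ω n, A D₁ ω n, W ω)) (fun ω => (Q D₂ ω n, A D₂ ω n, W ω)))
    (hdpriv : ∀ D ∈ 𝒟,
      mi q p (fun ω => Dᶜ.restrict (W ω)) (fun ω => (Q D ω, A D ω, F ω)) = 0)
    {D : Finset ι} (hD : D ∈ 𝒟) :
    Fintype.card κ * ∑ k ∈ D, ent q p (fun ω => W ω k) ≤
      (Fintype.card κ - 1) * cent q p (A D) F := by
  have messages : ∑ k, ent q p (fun ω => W ω k) ≤ cent q p W F :=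
    hWall ▸ ent_le_cent_of_ent_eq_add hq hp0 hp1 hind
  refine card_mul_le_of_add_cent_le hq hp0 fun n => ?_
  have query : cent q p (fun ω => Q D ω n) F = 0 :=
    le_antisymm (hQdet D hD ▸ cent_le_cent_of_factorsThrough_prod hq hp0 fun _ _ h =>
      congrFun (Prod.mk.inj h).1 n) (cent_nonneg hq hp0 _ _)
  have answer : cent q p (fun ω => A D ω n) F ≤ cent q p (fun ω => A D ω n)
      (fun ω => (W ω, F ω)) :=
    cent_answer_le_cent_answer_message hq hp0 hp1 hind query (hAdet D hD n) <|
      hWall ▸ sum_ent_message_le_cent_answer hq hp0 hp1 h𝒟 messages hrel hupriv hdpriv hD n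
  exact sum_ent_add_cent_le_cent hq hp0 hp1 messages (hrel D hD) (fun _ _ h => congrFun h n) answer

end LowerBound

theorem joint_answer_entropy_lower_bound
    {Ω MT QT AT FT ST : Type}
    [Fintype Ω] [Fintype MT] [DecidableEq MT] [Fintype QT] [DecidableEq QT]
    [Fintype AT] [DecidableEq AT] [Fintype FT] [DecidableEq FT]
    [Fintype ST] [DecidableEq ST]
    (N K P L q : ℕ) (hN : 2 ≤ N) (hK : 2 ≤ K) (hP1 : 1 ≤ P) (hP2 : P ≤ K - 1)
    (hL : 1 ≤ L) (hq : IsPrimePow q)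
    (p : Ω → ℝ) (hp0 : ∀ ω, 0 ≤ p ω) (hp1 : (∑ ω, p ω) = 1)
    (W : Fin K → Ω → MT) (F : Ω → FT) (S : Ω → ST)
    (Q : Finset (Fin K) → Fin N → Ω → QT)
    (A : Finset (Fin K) → Fin N → Ω → AT)
    (hWk : ∀ k, ent q p (W k) = (L : ℝ))
    (hWall : ent q p (fun ω (k : Fin K) => W k ω) = (K : ℝ) * L)
    (hind : ent q p (fun ω => (F ω, S ω, fun k : Fin K => W k ω)) =
      ent q p F + ent q p S + ent q p (fun ω (k : Fin K) => W k ω))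
    (hQdet : ∀ 𝒫₀ : Finset (Fin K), 𝒫₀.card = P →
      cent q p (fun ω (n : Fin N) => Q 𝒫₀ n ω) F = 0)
    (hAdet : ∀ 𝒫₀ : Finset (Fin K), 𝒫₀.card = P → ∀ n : Fin N,
      cent q p (A 𝒫₀ n) (fun ω => (Q 𝒫₀ n ω, (fun k : Fin K => W k ω), S ω)) = 0)
    (hrel : ∀ 𝒫₀ : Finset (Fin K), 𝒫₀.card = P →
      cent q p (fun ω (k : {x : Fin K // x ∈ 𝒫₀}) => W k.1 ω)
        (fun ω => ((fun n : Fin N => A 𝒫₀ n ω), F ω)) = 0)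
    (hupriv : ∀ (n : Fin N) (𝒫₁ 𝒫₂ : Finset (Fin K)), 𝒫₁.card = P → 𝒫₂.card = P →
      IdentDist p
        (fun ω => (Q 𝒫₁ n ω, A 𝒫₁ n ω, (fun k : Fin K => W k ω), S ω))
        (fun ω => (Q 𝒫₂ n ω, A 𝒫₂ n ω, (fun k : Fin K => W k ω), S ω)))
    (hdpriv : ∀ 𝒫₀ : Finset (Fin K), 𝒫₀.card = P →
      mi q p (fun ω (k : {x : Fin K // x ∈ 𝒫₀ᶜ}) => W k.1 ω)
        (fun ω => ((fun n : Fin N => Q 𝒫₀ n ω), (fun n : Fin N => A 𝒫₀ n ω), F ω)) = 0)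
    : ∀ (𝒫₀ : Finset (Fin K)), 𝒫₀.card = P →
      (N : ℝ) * P * L ≤ ((N : ℝ) - 1) * cent q p (fun ω (n : Fin N) => A 𝒫₀ n ω) F := by
  intro D hD
  have bound := joint_answer_entropy_lower_bound_general (W := fun ω k => W k ω)
    (Q := fun D ω n => Q D n ω) (A := fun D ω n => A D n ω) (𝒟 := {D | #D = P})
    hq.one_lt hp0 hp1 (exists_card_eq_notMem (by simp; lia)) (by simpa [hWk] using hWall) hind
    hQdet hAdet hrel
    (fun n D₁ h₁ D₂ h₂ => (hupriv n D₁ D₂ h₁ h₂).comp fun t => (t.1, t.2.1, t.2.2.1))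
    hdpriv hD
  simpa [hWk, hD, mul_assoc] using bound

end MMSPIR
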